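/- arXiv:1907.02308 — 2 statements merged into one kernel-verified Lean document; each statement's English description precedes it below -/
import Mathlib

section
/- Let Σ be a finite alphabet with |Σ| ≥ 2 and let K = (π_0, π_1, …, π_{k−1}) be a tuple of linear orders on Σ with π_0 = Id. Then BWT_K is rank-invertible if and only if the induced infinite sequence of orders σ_j = π_{j mod k} (for j ≥ 0) satisfies either σ_j = Id for all j (in which case BWT_K coincides with the Burrows-Wheeler Transform) or σ_j = Id for all even j and σ_j = Rev for all odd j (in which case BWT_K coincides with the Alternating Burrows-Wheeler Transform). In other words, the BWT and the ABWT are the only rank-invertible transformations of the form BWT_K. -/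
namespace Paper

variable {α : Type*}

/-- A word is primitive if its cyclic rotations are pairwise distinct. -/
def Primitive (w : List α) : Prop :=
  ∀ i j, i < w.length → j < w.length → w.rotate i = w.rotate j → i = j

/-- Generalized lexicographic strict order on equal-length words determined by a
sequence `σ` of strict orders, one per position (`σ d` is used at position `d`). -/
def KLt (σ : ℕ → α → α → Prop) : ℕ → List α → List α → Prop
  | _, [], _ => False
  | _, _ :: _, [] => False
  | d, a :: x, b :: y => σ d a b ∨ (a = b ∧ KLt σ (d + 1) x y)

/-- Rank-invertibility of the generalized BWT determined by the sequence of
per-position strict orders `σ`: there is a function `f` computing `LF i` from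
the Parikh vector of the last column `L`, the symbol `L i`, and the number of
occurrences of `L i` in `L[0..i]`. -/
def RankInvertible [LinearOrder α] (σ : ℕ → α → α → Prop) : Prop :=
  ∃ f : (α → ℕ) → α → ℕ → ℕ,
    ∀ (n : ℕ) (w : List α), w.length = n → Primitive w →
      ∀ (rows : Fin n → List α) (L : Fin n → α) (LF : Fin n → Fin n),
        (∀ j : Fin n, ∃ i : Fin n, rows i = w.rotate j.val) →
        (∀ i j : Fin n, i < j → KLt σ 0 (rows i) (rows j)) →
        (∀ i, (rows i).getLast? = some (L i)) →
        (∀ i, rows (LF i) = (rows i).rotate ((rows i).length - 1)) →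
        ∀ i : Fin n, (LF i : ℕ) =
          f (fun c => (List.ofFn L).count c) (L i)
            (((List.ofFn L).take (i.val + 1)).count (L i))

section Helpers

theorem KLt_irrefl {σ : ℕ → α → α → Prop} (hσ : ∀ d, IsStrictTotalOrder α (σ d)) (x : List α) :
    ∀ d, ¬ KLt σ d x x := by
  induction x with
  | nil => intro d; simp [KLt]
  | cons a x ih =>
    intro d h
    have := hσ d
    rcases h with h | ⟨_, h⟩
    · exact irrefl_of (σ d) a h
    · exact ih _ h

theorem KLt_trans {σ : ℕ → α → α → Prop} (hσ : ∀ d, IsStrictTotalOrder α (σ d)) (x : List α) :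
    ∀ d y z, KLt σ d x y → KLt σ d y z → KLt σ d x z := by
  induction x with
  | nil => intro d y z h; simp [KLt] at h
  | cons a x ih =>
    intro d y z h1 h2
    have := hσ d
    cases y with
    | nil => simp [KLt] at h1
    | cons b y =>
      cases z with
      | nil => simp [KLt] at h2
      | cons c z =>
        simp only [KLt] at *
        rcases h1 with h1 | ⟨rfl, h1⟩
        · rcases h2 with h2 | ⟨rfl, h2⟩
          · exact Or.inl (trans_of (σ d) h1 h2)
          · exact Or.inl h1
        · rcases h2 with h2 | ⟨rfl, h2⟩
          · exact Or.inl h2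
          · exact Or.inr ⟨rfl, ih _ _ _ h1 h2⟩

theorem KLt_asymm {σ : ℕ → α → α → Prop} (hσ : ∀ d, IsStrictTotalOrder α (σ d)) {d} {x y : List α}
    (h : KLt σ d x y) : ¬ KLt σ d y x :=
  fun h' => KLt_irrefl hσ x d (KLt_trans hσ x d y x h h')

theorem tri {r : α → α → Prop} (h : IsStrictTotalOrder α r) {a b : α} (hab : a ≠ b) :
    r a b ↔ ¬ r b a := by
  constructor
  · intro h1 h2
    exact irrefl_of r a (trans_of r h1 h2)
  · intro h1
    rcases trichotomous_of r a b with h | h | h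
    · exact h
    · exact absurd h hab
    · exact absurd h h1

theorem KLt_total {σ : ℕ → α → α → Prop} (hσ : ∀ d, IsStrictTotalOrder α (σ d)) (x : List α) :
    ∀ d y, x.length = y.length → x ≠ y → KLt σ d x y ∨ KLt σ d y x := by
  induction x with
  | nil =>
    intro d y h hne
    cases y with
    | nil => exact absurd rfl hne
    | cons b y => simp at h
  | cons a x ih =>
    intro d y h hne
    cases y with
    | nil => simp at h
    | cons b y =>
      simp only [KLt]
      by_cases hab : a = b
      · subst hab
        rcases ih (d+1) y (by simpa using h) (by simpa using hne) with h | h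
        · exact Or.inl (Or.inr ⟨rfl, h⟩)
        · exact Or.inr (Or.inr ⟨rfl, h⟩)
      · have := tri (hσ d) hab
        by_cases h' : σ d b a
        · exact Or.inr (Or.inl h')
        · exact Or.inl (Or.inl (this.2 h'))

theorem KLt_append {σ : ℕ → α → α → Prop} (hσ : ∀ d, IsStrictTotalOrder α (σ d)) {a b : α}
    (hab : a ≠ b) (s t u : List α) :
    ∀ d, KLt σ d (u ++ a :: s) (u ++ b :: t) ↔ σ (d + u.length) a b := by
  induction u with
  | nil => intro d; simp [KLt, hab]
  | cons c u ih =>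
    intro d
    have := hσ d
    have h1 : ¬ σ d c c := irrefl_of (σ d) c
    simp only [List.cons_append, KLt, h1, true_and, false_or, ih, List.length_cons]
    rw [show d + 1 + u.length = d + (u.length + 1) by omega]

theorem KLt_snoc {σ : ℕ → α → α → Prop} (hσ : ∀ d, IsStrictTotalOrder α (σ d)) (c : α) (x : List α) :
    ∀ d y, x.length = y.length → (KLt σ d (x ++ [c]) (y ++ [c]) ↔ KLt σ d x y) := by
  induction x with
  | nil =>
    intro d y h
    have : y = [] := by simpa using h.symm
    subst this
    have := hσ d
    simp [KLt, irrefl_of (σ d) c]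
  | cons a x ih =>
    intro d y h
    cases y with
    | nil => simp at h
    | cons b y =>
      simp only [List.cons_append, KLt]
      rw [ih _ _ (by simpa using h)]

theorem KLt_shift {σ : ℕ → α → α → Prop} (hs : ∀ d a b, σ (d+1) a b ↔ σ d a b) (x : List α) :
    ∀ d y, KLt σ (d+1) x y ↔ KLt σ d x y := by
  induction x with
  | nil => intro d y; simp [KLt]
  | cons a x ih =>
    intro d y
    cases y with
    | nil => simp [KLt]
    | cons b y => simp only [KLt, hs, ih]

theorem KLt_shift_rev {σ : ℕ → α → α → Prop} (hs : ∀ d a b, σ (d+1) a b ↔ σ d b a) (x : List α) :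
    ∀ d y, KLt σ (d+1) x y ↔ KLt σ d y x := by
  induction x with
  | nil => intro d y; cases y <;> simp [KLt]
  | cons a x ih =>
    intro d y
    cases y with
    | nil => simp [KLt]
    | cons b y => simp only [KLt, hs, ih, eq_comm]

theorem rotate_snoc (x : List α) (c : α) :
    (x ++ [c]).rotate ((x ++ [c]).length - 1) = c :: x := by
  have : (x ++ [c]).length - 1 = x.length := by simp
  rw [this, List.rotate_append_length_eq]
  rfl

theorem count_take [DecidableEq α] {n : ℕ} (L : Fin n → α) (c : α) (m : ℕ) (hm : m ≤ n) :
    ((List.ofFn L).take m).count c =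
      (Finset.univ.filter (fun j : Fin n => j.val < m ∧ L j = c)).card := by
  induction m with
  | zero => simp
  | succ m ih =>
    rw [List.take_succ_eq_append_getElem (by simpa using hm), List.count_append, ih (by omega)]
    simp only [List.getElem_ofFn, List.count_singleton]
    by_cases h : L ⟨m, hm⟩ = c
    · have : (Finset.univ.filter (fun j : Fin n => j.val < m + 1 ∧ L j = c)) =
        insert ⟨m, hm⟩ (Finset.univ.filter (fun j : Fin n => j.val < m ∧ L j = c)) := by
        ext j
        simp only [Finset.mem_filter, Finset.mem_univ, true_and, Finset.mem_insert, Fin.ext_iff]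
        constructor
        · rintro ⟨h1, h2⟩
          by_cases hj : j.val = m
          · exact Or.inl hj
          · exact Or.inr ⟨by omega, h2⟩
        · rintro (h1 | ⟨h1, h2⟩)
          · refine ⟨by omega, ?_⟩
            rw [← h]; congr 1; exact Fin.ext h1
          · exact ⟨by omega, h2⟩
      rw [this, Finset.card_insert_of_notMem (by simp)]
      simp [h]
    · have : (Finset.univ.filter (fun j : Fin n => j.val < m + 1 ∧ L j = c)) =
        (Finset.univ.filter (fun j : Fin n => j.val < m ∧ L j = c)) := by
        ext j
        simp only [Finset.mem_filter, Finset.mem_univ, true_and]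
        constructor
        · rintro ⟨h1, h2⟩
          refine ⟨?_, h2⟩
          by_contra hj
          apply h
          rw [← h2]; congr 1; exact Fin.ext (by simp; omega)
        · rintro ⟨h1, h2⟩
          exact ⟨by omega, h2⟩
      rw [this]
      simp [h]

theorem count_full [DecidableEq α] {n : ℕ} (L : Fin n → α) (c : α) :
    (List.ofFn L).count c = (Finset.univ.filter (fun j : Fin n => L j = c)).card := by
  have := count_take L c n le_rfl
  rw [List.take_of_length_le (by simp)] at this
  rw [this]
  congr 1
  ext j; simp

/-- core counting facts about `LF` -/
theorem LF_card [LinearOrder α] [Fintype α] {n : ℕ} (L : Fin n → α) (LF : Fin n → Fin n)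
    (hinj : Function.Injective LF) (hlt : ∀ i j, L i < L j → LF i < LF j) (i : Fin n) :
    (LF i : ℕ) = (∑ a ∈ Finset.univ.filter (fun a : α => a < L i), (List.ofFn L).count a) +
      (Finset.univ.filter (fun j : Fin n => LF j < LF i ∧ L j = L i)).card := by
  have hbij : Function.Bijective LF := Finite.injective_iff_bijective.1 hinj
  have h1 : (Finset.univ.filter (fun j : Fin n => LF j < LF i)).card = (LF i : ℕ) := by
    rw [← Fin.card_Iio (LF i)]
    apply Finset.card_bijective LF hbij
    simp
  have h2 : (∑ a ∈ Finset.univ.filter (fun a : α => a < L i), (List.ofFn L).count a) =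
      (Finset.univ.filter (fun j : Fin n => L j < L i)).card := by
    rw [Finset.card_eq_sum_card_fiberwise (f := L)
      (t := Finset.univ.filter (fun a : α => a < L i)) (by intro j; simp)]
    apply Finset.sum_congr rfl
    intro a ha
    simp only [Finset.mem_filter, Finset.mem_univ, true_and] at ha
    rw [count_full]
    congr 1
    ext j
    simp only [Finset.mem_filter, Finset.mem_univ, true_and]
    constructor
    · rintro rfl; exact ⟨ha, rfl⟩
    · exact fun h => h.2
  rw [h2, ← h1, ← Finset.card_union_of_disjoint]
  · congr 1
    ext j
    simp only [Finset.mem_filter, Finset.mem_univ, true_and, Finset.mem_union]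
    constructor
    · intro h
      rcases lt_trichotomy (L j) (L i) with h' | h' | h'
      · exact Or.inl h'
      · exact Or.inr ⟨h, h'⟩
      · exact absurd (hlt _ _ h') (lt_asymm h)
    · rintro (h | h)
      · exact hlt _ _ h
      · exact h.1
  · rw [Finset.disjoint_left]
    intro j h1 h2
    simp only [Finset.mem_filter, Finset.mem_univ, true_and] at h1 h2
    exact absurd h1 (by rw [h2.2]; exact lt_irrefl _)

theorem rows_equiv {n : ℕ} {w : List α} (hn : w.length = n) (hp : Primitive w)
    (rows : Fin n → List α) (hr : ∀ j : Fin n, ∃ i : Fin n, rows i = w.rotate j.val) :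
    ∃ e : Fin n ≃ Fin n, ∀ i, rows i = w.rotate (e i).val := by
  choose g hg using hr
  have ginj : Function.Injective g := by
    intro a b hab
    have : w.rotate a.val = w.rotate b.val := by rw [← hg, ← hg, hab]
    exact Fin.ext (hp _ _ (by rw [hn]; exact a.2) (by rw [hn]; exact b.2) this)
  refine ⟨(Equiv.ofBijective g (Finite.injective_iff_bijective.1 ginj)).symm, fun i => ?_⟩
  rw [← hg]
  congr 1
  exact ((Equiv.ofBijective g (Finite.injective_iff_bijective.1 ginj)).apply_symm_apply i).symm

theorem rank_inv_of_shift [LinearOrder α] [Fintype α] (σ : ℕ → α → α → Prop)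
    (hσ : ∀ d, IsStrictTotalOrder α (σ d)) (h0 : ∀ a b, σ 0 a b ↔ a < b)
    (h : (∀ d a b, σ (d+1) a b ↔ σ d a b) ∨ (∀ d a b, σ (d+1) a b ↔ σ d b a)) :
    RankInvertible σ := by
  -- common facts
  have key : ∀ (n : ℕ) (w : List α), w.length = n → Primitive w →
      ∀ (rows : Fin n → List α) (L : Fin n → α) (LF : Fin n → Fin n),
        (∀ j : Fin n, ∃ i : Fin n, rows i = w.rotate j.val) →
        (∀ i j : Fin n, i < j → KLt σ 0 (rows i) (rows j)) →
        (∀ i, (rows i).getLast? = some (L i)) →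
        (∀ i, rows (LF i) = (rows i).rotate ((rows i).length - 1)) →
        Function.Injective LF ∧ (∀ i j, L i < L j → LF i < LF j) ∧
        (∀ i j, L i = L j → ∃ x y : List α, x.length = y.length ∧ 
          (i < j ↔ KLt σ 0 x y) ∧ (LF i < LF j ↔ KLt σ 1 x y) ∧ (j < i ↔ KLt σ 0 y x)) := by
    intro n w hn hp rows L LF hr hs hL hLF
    obtain ⟨e, he⟩ := rows_equiv hn hp rows hr
    have hlen : ∀ i, (rows i).length = n := by intro i; rw [he]; simp [hn]
    have hrinj : Function.Injective rows := by
      intro a b hab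
      rw [he, he] at hab
      exact e.injective (Fin.ext (hp _ _ (by rw [hn]; exact (e a).2) (by rw [hn]; exact (e b).2) hab))
    have hiff : ∀ i j, i < j ↔ KLt σ 0 (rows i) (rows j) := by
      intro i j
      refine ⟨hs i j, fun h => ?_⟩
      by_contra hij
      rcases eq_or_lt_of_le (not_lt.1 hij) with h' | h'
      · rw [h'] at h; exact KLt_irrefl hσ _ _ h
      · exact KLt_asymm hσ h (hs _ _ h')
    have hx : ∀ i, ∃ x, rows i = x ++ [L i] := by
      intro i
      exact ⟨_, (List.dropLast_append_getLast? _ (hL i)).symm⟩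
    choose x hx using hx
    have hLFx : ∀ i, rows (LF i) = L i :: x i := by
      intro i; rw [hLF, hx, rotate_snoc]
    have hxlen : ∀ i, (x i).length + 1 = n := by
      intro i
      have := hlen i
      rw [hx] at this
      simpa using this
    refine ⟨?_, ?_, ?_⟩
    · intro a b hab
      have := congrArg rows hab
      rw [hLFx, hLFx] at this
      injection this with h1 h2
      apply hrinj
      rw [hx, hx, h1, h2]
    · intro i j hij
      rw [hiff, hLFx, hLFx]
      exact Or.inl ((h0 _ _).2 hij)
    · intro i j hij
      have hxl : (x i).length = (x j).length := by have := hxlen i; have := hxlen j; omega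
      refine ⟨x i, x j, hxl, ?_, ?_, ?_⟩
      · rw [hiff, hx i, hx j, hij, KLt_snoc hσ _ _ _ _ hxl]
      · rw [hiff, hLFx, hLFx, hij]
        simp [KLt, h0]
      · rw [hiff, hx i, hx j, hij, KLt_snoc hσ _ _ _ _ hxl.symm]
  rcases h with h | h
  · refine ⟨fun P c r => (∑ a ∈ Finset.univ.filter (fun a : α => a < c), P a) + (r - 1), ?_⟩
    intro n w hn hp rows L LF hr hs hL hLF i
    obtain ⟨k1, k2, k3⟩ := key n w hn hp rows L LF hr hs hL hLF
    rw [LF_card L LF k1 k2 i, count_take _ _ _ i.2]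
    congr 1
    have : (Finset.univ.filter (fun j : Fin n => j.val < i.val + 1 ∧ L j = L i)) =
        insert i (Finset.univ.filter (fun j : Fin n => LF j < LF i ∧ L j = L i)) := by
      ext j
      simp only [Finset.mem_filter, Finset.mem_univ, true_and, Finset.mem_insert]
      by_cases hj : L j = L i
      · obtain ⟨x, y, hl, h1, h2, h3⟩ := k3 j i hj
        rw [KLt_shift h] at h2
        simp only [hj, and_true, h2, ← h1, Fin.ext_iff, Fin.lt_def]
        omega
      · simp only [hj, and_false, or_false, false_iff]
        rintro rfl; exact hj rfl
    rw [this, Finset.card_insert_of_notMem (by simp)]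
    simp
  · refine ⟨fun P c r => (∑ a ∈ Finset.univ.filter (fun a : α => a < c), P a) + (P c - r), ?_⟩
    intro n w hn hp rows L LF hr hs hL hLF i
    obtain ⟨k1, k2, k3⟩ := key n w hn hp rows L LF hr hs hL hLF
    rw [LF_card L LF k1 k2 i, count_take _ _ _ i.2]
    congr 1
    change _ = (List.ofFn L).count (L i) - _
    rw [count_full]
    have : (Finset.univ.filter (fun j : Fin n => L j = L i)) =
        (Finset.univ.filter (fun j : Fin n => LF j < LF i ∧ L j = L i)) ∪
        (Finset.univ.filter (fun j : Fin n => j.val < i.val + 1 ∧ L j = L i)) := by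
      ext j
      simp only [Finset.mem_filter, Finset.mem_univ, true_and, Finset.mem_union]
      by_cases hj : L j = L i
      · obtain ⟨x, y, hl, h1, h2, h3⟩ := k3 j i hj
        rw [KLt_shift_rev h] at h2
        rw [← h3] at h2
        simp only [hj, and_true, true_iff]
        by_cases hji : i < j
        · exact Or.inl (h2.2 hji)
        · right
          rw [Fin.lt_def] at hji
          omega
      · simp [hj]
    rw [this, Finset.card_union_of_disjoint]
    · simp
    · rw [Finset.disjoint_left]
      intro j g1 g2
      simp only [Finset.mem_filter, Finset.mem_univ, true_and] at g1 g2
      obtain ⟨x, y, hl, h1, h2, h3⟩ := k3 j i g1.2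
      rw [KLt_shift_rev h, ← h3] at h2
      have := h2.1 g1.1
      rw [Fin.lt_def] at this
      omega

theorem exists_sort {β : Type*} [Fintype β] (r : β → β → Prop) (hr : IsStrictTotalOrder β r)
    (n : ℕ) (hn : Fintype.card β = n) : ∃ e : Fin n ≃ β, ∀ i j, i < j → r (e i) (e j) := by
  classical
  letI : LinearOrder β := linearOrderOfSTO r
  let e := Fintype.orderIsoFinOfCardEq β hn
  exact ⟨e.toEquiv, fun i j h => e.lt_iff_lt.2 h⟩

theorem lemA [LinearOrder α] {σ : ℕ → α → α → Prop}
    (hσ : ∀ d, IsStrictTotalOrder α (σ d)) {f : (α → ℕ) → α → ℕ → ℕ}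
    (hf : ∀ (n : ℕ) (w : List α), w.length = n → Primitive w →
      ∀ (rows : Fin n → List α) (L : Fin n → α) (LF : Fin n → Fin n),
        (∀ j : Fin n, ∃ i : Fin n, rows i = w.rotate j.val) →
        (∀ i j : Fin n, i < j → KLt σ 0 (rows i) (rows j)) →
        (∀ i, (rows i).getLast? = some (L i)) →
        (∀ i, rows (LF i) = (rows i).rotate ((rows i).length - 1)) →
        ∀ i : Fin n, (LF i : ℕ) =
          f (fun c => (List.ofFn L).count c) (L i)
            (((List.ofFn L).take (i.val + 1)).count (L i)))
    {w : List α} (hp : Primitive w) {x : α} (hx : w.count x = 2) {r1 r2 : List α}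
    (j1 j2 : Fin w.length) (h1 : w.rotate j1 = r1 ++ [x]) (h2 : w.rotate j2 = r2 ++ [x])
    (hlt : KLt σ 0 (r1 ++ [x]) (r2 ++ [x])) :
    f (fun c => w.count c) x 1 < f (fun c => w.count c) x 2 ↔ KLt σ 0 (x :: r1) (x :: r2) := by
  have hne : ∀ j, w.rotate j ≠ [] := by
    intro j h
    have := congrArg List.length h
    have h3 := congrArg List.length h1
    simp at this h3
    simp [this] at h3
  have hsto : IsStrictTotalOrder (Fin w.length)
      (fun i j => KLt σ 0 (w.rotate i) (w.rotate j)) :=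
    { irrefl := fun i => KLt_irrefl hσ _ _
      trans := fun i j k => KLt_trans hσ _ _ _ _
      trichotomous := fun i j hi hj => by
        by_contra hij
        rcases KLt_total hσ (w.rotate i) 0 (w.rotate j) (by simp)
          (fun h => hij (Fin.ext (hp _ _ i.2 j.2 h))) with h | h
        · exact hi h
        · exact hj h }
  obtain ⟨e, he⟩ := exists_sort _ hsto w.length (by simp)
  have hr : ∀ j : Fin w.length, ∃ i, w.rotate (e i) = w.rotate j.val :=
    fun j => ⟨e.symm j, by simp⟩
  have hLF : ∀ i, ∃ i', w.rotate (e i') =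
      (w.rotate (e i)).rotate ((w.rotate (e i)).length - 1) := by
    intro i
    rw [List.rotate_rotate, ← List.rotate_mod]
    exact hr ⟨_, Nat.mod_lt _ i.pos⟩
  choose LF hLF using hLF
  let L : Fin w.length → α := fun i => (w.rotate (e i)).getLast (hne _)
  have hL : ∀ i, (w.rotate (e i)).getLast? = some (L i) := fun i =>
    List.getLast?_eq_some_getLast (hne _)
  have hperm : (List.ofFn L).Perm w := by
    have hinj : Function.Injective (fun i => e (LF i)) := by
      intro i j hij
      have hij' : LF i = LF j := e.injective hij
      have h3 := (hLF i).symm.trans ((congrArg (fun z => w.rotate (e z)) hij').trans (hLF j))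
      simp only [List.length_rotate] at h3
      have h4 := List.rotate_injective _ h3
      exact e.injective (Fin.ext (hp _ _ (e i).2 (e j).2 h4))
    let τ : Equiv.Perm (Fin w.length) :=
      Equiv.ofBijective _ (Finite.injective_iff_bijective.1 hinj)
    have hg : L = w.get ∘ τ := by
      funext i
      have h3 := hLF i
      rw [← List.dropLast_append_getLast? _ (hL i), rotate_snoc] at h3
      have h4 : (w.rotate (e (LF i)))[0]? = some (L i) := by rw [h3]; simp
      rw [List.getElem?_rotate i.pos, zero_add, Nat.mod_eq_of_lt (e (LF i)).2,
        List.getElem?_eq_getElem (e (LF i)).2] at h4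
      exact (Option.some.inj h4).symm
    rw [hg]
    have h5 := Equiv.Perm.ofFn_comp_perm τ w.get
    rwa [List.ofFn_get] at h5
  have hcount : (fun c => (List.ofFn L).count c) = (fun c => w.count c) := by
    funext c; exact hperm.count_eq c
  have hfin := hf w.length w rfl hp (fun i => w.rotate (e i)) L LF hr he hL hLF
  rw [hcount] at hfin
  have hiff : ∀ i j, i < j ↔ KLt σ 0 (w.rotate (e i)) (w.rotate (e j)) := by
    intro i j
    refine ⟨he i j, fun h => ?_⟩
    by_contra hij
    rcases eq_or_lt_of_le (not_lt.1 hij) with h' | h'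
    · rw [h'] at h; exact KLt_irrefl hσ _ _ h
    · exact KLt_asymm hσ h (he _ _ h')
  obtain ⟨i1, rfl⟩ := e.surjective j1
  obtain ⟨i2, rfl⟩ := e.surjective j2
  have hL1 : L i1 = x := by simp [L, h1]
  have hL2 : L i2 = x := by simp [L, h2]
  have hi : i1 < i2 := by rw [hiff, h1, h2]; exact hlt
  have c1 : ((List.ofFn L).take (i1.val + 1)).count x =
      ((List.ofFn L).take i1.val).count x + 1 := by
    rw [List.take_succ_eq_append_getElem (by simp), List.count_append]
    simp [hL1]
  have c2 : ((List.ofFn L).take (i2.val + 1)).count x =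
      ((List.ofFn L).take i2.val).count x + 1 := by
    rw [List.take_succ_eq_append_getElem (by simp), List.count_append]
    simp [hL2]
  have c3 : ((List.ofFn L).take (i1.val+1)).count x ≤ ((List.ofFn L).take i2.val).count x :=
    (List.take_sublist_take_left (by omega)).count_le x
  have c4 : ((List.ofFn L).take (i2.val+1)).count x ≤ 2 := by
    rw [← hx, ← hperm.count_eq]
    exact (List.take_sublist _ _).count_le x
  have f1 := hfin i1
  have f2 := hfin i2
  rw [hL1, show ((List.ofFn L).take (i1.val+1)).count x = 1 by omega] at f1
  rw [hL2, show ((List.ofFn L).take (i2.val+1)).count x = 2 by omega] at f2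
  rw [← f1, ← f2, ← Fin.lt_def, hiff, hLF, hLF, h1, h2, rotate_snoc, rotate_snoc]

theorem prim_w {x y : α} {u t : List α} (hu : x ∉ u) (ht : x ∉ t) (hxy : x ≠ y) :
    Primitive (x :: (u ++ x :: (u ++ y :: t))) := by
  set w := x :: (u ++ x :: (u ++ y :: t)) with hw
  have hlen : w.length = 2 * u.length + 3 + t.length := by simp [hw]; omega
  have hx : ∀ d, w[d]? = some x → d = 0 ∨ d = u.length + 1 := by
    intro d hd
    cases d with
    | zero => exact Or.inl rfl
    | succ d =>
      right
      rw [hw, List.getElem?_cons_succ] at hd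
      rcases lt_trichotomy d u.length with h | h | h
      · rw [List.getElem?_append_left h] at hd
        exact absurd (List.mem_of_getElem? hd) hu
      · rw [h]
      · rw [List.getElem?_append_right h.le] at hd
        obtain ⟨m, hm⟩ : ∃ m, d - u.length = m + 1 := ⟨d - u.length - 1, by omega⟩
        rw [hm, List.getElem?_cons_succ] at hd
        have := List.mem_of_getElem? hd
        simp [hu, ht, hxy] at this
  have aux : ∀ d, 0 < d → d < w.length → w.rotate d ≠ w := by
    intro d h0 hd h
    have e0 : (w.rotate d)[0]? = some x := by rw [h]; simp [hw]
    rw [List.getElem?_rotate (by omega)] at e0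
    have := hx _ e0
    rw [Nat.mod_eq_of_lt (by omega)] at this
    have hd' : d = u.length + 1 := by omega
    have e1 : (w.rotate d)[u.length + 1]? = some x := by rw [h]; simp [hw]
    rw [List.getElem?_rotate (by omega), Nat.mod_eq_of_lt (by omega)] at e1
    have := hx _ e1
    omega
  have aux2 : ∀ i j, i < j → j < w.length → w.rotate i ≠ w.rotate j := by
    intro i j hij hj h
    apply aux (j - i) (by omega) (by omega)
    apply List.rotate_injective i
    simp only [List.rotate_rotate]
    rw [show j - i + i = j by omega, h]
  intro i j hi hj h
  rcases lt_trichotomy i j with h' | h' | h'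
  · exact absurd h (aux2 _ _ h' hj)
  · exact h'
  · exact absurd h.symm (aux2 _ _ h' hi)

theorem lemB [LinearOrder α] {σ : ℕ → α → α → Prop}
    (hσ : ∀ d, IsStrictTotalOrder α (σ d)) {f : (α → ℕ) → α → ℕ → ℕ}
    (hf : ∀ (n : ℕ) (w : List α), w.length = n → Primitive w →
      ∀ (rows : Fin n → List α) (L : Fin n → α) (LF : Fin n → Fin n),
        (∀ j : Fin n, ∃ i : Fin n, rows i = w.rotate j.val) →
        (∀ i j : Fin n, i < j → KLt σ 0 (rows i) (rows j)) →
        (∀ i, (rows i).getLast? = some (L i)) →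
        (∀ i, rows (LF i) = (rows i).rotate ((rows i).length - 1)) →
        ∀ i : Fin n, (LF i : ℕ) =
          f (fun c => (List.ofFn L).count c) (L i)
            (((List.ofFn L).take (i.val + 1)).count (L i)))
    {x y : α} {u t : List α} (hu : x ∉ u) (ht : x ∉ t) (hxy : x ≠ y) :
    f (fun c => (x :: (u ++ x :: (u ++ y :: t))).count c) x 1 <
      f (fun c => (x :: (u ++ x :: (u ++ y :: t))).count c) x 2 ↔
    (σ u.length x y ↔ σ (u.length + 1) x y) := by
  have hp := prim_w hu ht hxy
  have hc : (x :: (u ++ x :: (u ++ y :: t))).count x = 2 := by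
    simp [List.count_cons, List.count_eq_zero_of_not_mem hu, List.count_eq_zero_of_not_mem ht,
      hxy.symm]
  have h1 : (x :: (u ++ x :: (u ++ y :: t))).rotate 1 = (u ++ x :: (u ++ y :: t)) ++ [x] := by
    simp
  have h2 : (x :: (u ++ x :: (u ++ y :: t))).rotate (u.length + 2) =
      (u ++ y :: (t ++ x :: u)) ++ [x] := by
    have := List.rotate_append_length_eq (x :: (u ++ [x])) (u ++ y :: t)
    simpa using this
  have a1 := KLt_append hσ hxy (u ++ y :: t ++ [x]) (t ++ x :: u ++ [x]) u 0
  have a2 := KLt_append hσ hxy.symm (t ++ x :: u ++ [x]) (u ++ y :: t ++ [x]) u 0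
  have b1 := KLt_append hσ hxy (u ++ y :: t) (t ++ x :: u) (x :: u) 0
  have b2 := KLt_append hσ hxy.symm (t ++ x :: u) (u ++ y :: t) (x :: u) 0
  have t1 := tri (hσ u.length) hxy
  have t2 := tri (hσ (u.length + 1)) hxy
  simp only [List.length_cons, zero_add, List.cons_append, List.append_assoc] at a1 a2 b1 b2
  by_cases h : σ u.length x y
  · have := lemA hσ hf hp hc ⟨1, by simp⟩ ⟨u.length + 2, by simp; omega⟩ h1 h2
      (by simpa using a1.2 h)
    rw [this, b1]
    simp [h]
  · have := lemA hσ hf hp hc ⟨u.length + 2, by simp; omega⟩ ⟨1, by simp⟩ h2 h1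
      (by
        have : σ u.length y x := by tauto
        simpa using a2.2 this)
    rw [this, b2]
    tauto

theorem forward [LinearOrder α] {σ : ℕ → α → α → Prop}
    (hσ : ∀ d, IsStrictTotalOrder α (σ d)) (hR : RankInvertible σ) :
    (∀ d a b, σ (d+1) a b ↔ σ d a b) ∨ (∀ d a b, σ (d+1) a b ↔ σ d b a) := by
  obtain ⟨f, hf⟩ := hR
  have irr : ∀ d a, ¬ σ d a a := fun d a => by
    have := hσ d
    exact irrefl_of (σ d) a
  have s1 : ∀ p x y, x ≠ y → ((σ p x y ↔ σ (p+1) x y) ↔ (σ 0 x y ↔ σ 1 x y)) := by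
    intro p x y hxy
    have A := lemB hσ hf (x := x) (y := y) (u := List.replicate p y) (t := [])
      (by simp [List.mem_replicate, hxy]) (by simp) hxy
    have B := lemB hσ hf (x := x) (y := y) (u := []) (t := List.replicate (2*p) y)
      (by simp) (by simp [List.mem_replicate, hxy]) hxy
    rw [List.length_replicate] at A
    simp only [List.length_nil, zero_add] at B
    rw [← A, ← B]
    have : (fun c => (x :: (List.replicate p y ++ x :: (List.replicate p y ++ y :: []))).count c) =
        (fun c => (x :: ([] ++ x :: ([] ++ y :: List.replicate (2*p) y))).count c) := by
      funext c
      simp only [List.count_cons, List.count_append, List.count_replicate, List.count_nil,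
        List.nil_append]
      split_ifs <;> omega
    rw [this]
  have s2 : ∀ b a c, b ≠ a → b ≠ c → ((σ 0 b a ↔ σ 1 b a) ↔ (σ 0 b c ↔ σ 1 b c)) := by
    intro b a c hba hbc
    have A := lemB hσ hf (x := b) (y := a) (u := []) (t := [c]) (by simp) (by simpa using hbc) hba
    have B := lemB hσ hf (x := b) (y := c) (u := []) (t := [a]) (by simp) (by simpa using hba) hbc
    simp only [List.length_nil, zero_add] at A B
    rw [← A, ← B]
    have : (fun d => (b :: ([] ++ b :: ([] ++ a :: [c]))).count d) =
        (fun d => (b :: ([] ++ b :: ([] ++ c :: [a]))).count d) := by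
      funext d
      simp only [List.count_cons, List.count_nil, List.nil_append]
      omega
    rw [this]
  have s3 : ∀ x y, x ≠ y → ((σ 0 x y ↔ σ 1 x y) ↔ (σ 0 y x ↔ σ 1 y x)) := by
    intro x y hxy
    have t1 := tri (hσ 0) hxy
    have t2 := tri (hσ 1) hxy
    tauto
  by_cases h : ∃ x y, x ≠ y ∧ (σ 0 x y ↔ σ 1 x y)
  · obtain ⟨x, y, hxy, h⟩ := h
    have all : ∀ a b, a ≠ b → (σ 0 a b ↔ σ 1 a b) := by
      intro a b hab
      by_cases hxa : x = a
      · subst hxa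
        exact (s2 x y b hxy hab).1 h
      · exact (s2 a x b (Ne.symm hxa) hab).1 ((s3 x a hxa).1 ((s2 x y a hxy hxa).1 h))
    left
    intro d a b
    by_cases hab : a = b
    · subst hab; simp [irr]
    · exact ((s1 d a b hab).2 (all a b hab)).symm
  · right
    intro d a b
    by_cases hab : a = b
    · subst hab; simp [irr]
    · have h1 : ¬ (σ 0 a b ↔ σ 1 a b) := fun h' => h ⟨a, b, hab, h'⟩
      have := s1 d a b hab
      have := tri (hσ d) hab
      tauto

end Helpers

/-- for a finite alphabet with at least two symbols and a tuple
`K = (π 0, …, π (k-1))` of linear orders with `π 0 = Id`, `BWT_K` is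
rank-invertible iff the induced infinite sequence `σ j = π (j % k)` is either
constantly `Id` (the BWT) or alternates `Id` at even positions and `Rev` at
odd positions (the ABWT). -/
theorem bwtK_rank_invertible_iff_bwt_or_abwt [LinearOrder α] [Fintype α]
    (hcard : 2 ≤ Fintype.card α)
    (k : ℕ) (hk : 0 < k) (π : Fin k → α → α → Prop)
    (horder : ∀ t, IsStrictTotalOrder α (π t))
    (h0 : π ⟨0, hk⟩ = fun a b : α => a < b) :
    RankInvertible (fun d => π ⟨d % k, Nat.mod_lt d hk⟩) ↔
      ((∀ d : ℕ, π ⟨d % k, Nat.mod_lt d hk⟩ = fun a b : α => a < b) ∨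
       (∀ d : ℕ,
          (Even d → π ⟨d % k, Nat.mod_lt d hk⟩ = fun a b : α => a < b) ∧
          (¬ Even d → π ⟨d % k, Nat.mod_lt d hk⟩ = fun a b : α => b < a))) := by
  have hσ : ∀ d : ℕ, IsStrictTotalOrder α (π ⟨d % k, Nat.mod_lt d hk⟩) := fun d => horder _
  have hz : π ⟨0 % k, Nat.mod_lt 0 hk⟩ = fun a b : α => a < b := by
    rw [← h0]; congr 1
  constructor
  · intro hR
    rcases forward hσ hR with h | h
    · left
      intro d
      induction d with
      | zero => exact hz
      | succ d ih => rw [← ih]; funext a b; exact propext (h d a b)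
    · right
      intro d
      induction d with
      | zero => exact ⟨fun _ => hz, fun h => absurd Even.zero h⟩
      | succ d ih =>
        constructor
        · intro hd
          have hd' : ¬ Even d := by rwa [Nat.even_add_one] at hd
          funext a b
          rw [propext (h d a b), ih.2 hd']
        · intro hd
          have hd' : Even d := by rw [Nat.even_add_one] at hd; exact not_not.1 hd
          funext a b
          rw [propext (h d a b), ih.1 hd']
  · intro h
    refine rank_inv_of_shift _ hσ (fun a b => by rw [hz]) ?_
    rcases h with h | h
    · left
      intro d a b
      simp only [h]
    · right
      intro d a b
      by_cases hd : Even d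
      · have hd' : ¬ Even (d + 1) := by rw [Nat.even_add_one]; exact not_not.2 hd
        simp only [(h d).1 hd, (h (d+1)).2 hd']
      · have hd' : Even (d + 1) := by rwa [Nat.even_add_one]
        simp only [(h d).2 hd, (h (d+1)).1 hd']

end Paper
end

section
/- Let w be a primitive Galois word over a linearly ordered alphabet and let w = u'v' = u''v'' be two factorizations of w with v' and v'' nonempty suffixes, v' ≠ v''. Then v'u' ≺_alt v''u'' if and only if v' ≺_alt v'', where the first comparison is between equal-length words and the second is in the alternating lexicographic order extended to words of different lengths. -/
namespace Paper

variable {α : Type*}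

/-- Extended alternating lexicographic strict order; the flag `b` is `true`
when the current position index is even. -/
def altLtAux [LinearOrder α] : Bool → List α → List α → Prop
  | _, [], [] => False
  | b, [], _ :: _ => b = true
  | b, _ :: _, [] => b = false
  | b, c :: x, d :: y => (if b then c < d else d < c) ∨ (c = d ∧ altLtAux (!b) x y)

/-- The alternating lexicographic strict order (positions indexed from 0). -/
def AltLt [LinearOrder α] (x y : List α) : Prop := altLtAux true x y

/-- The reflexive alternating lexicographic order. -/
def AltLe [LinearOrder α] (x y : List α) : Prop := x = y ∨ AltLt x y

/-- A primitive word `w` is a Galois word if `w ≼_alt vu` for every nontrivial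
factorization `w = uv`. -/
def IsGalois [LinearOrder α] (w : List α) : Prop :=
  Primitive w ∧ ∀ u v : List α, w = u ++ v → u ≠ [] → v ≠ [] → AltLe w (v ++ u)
theorem altLtAux_flip [LinearOrder α] (x : List α) : ∀ (b : Bool) (y : List α),
    altLtAux (!b) x y ↔ altLtAux b y x := by
  induction x with
  | nil => intro b y; cases y <;> cases b <;> simp [altLtAux]
  | cons c x ih =>
    intro b y
    cases y with
    | nil => cases b <;> simp [altLtAux]
    | cons d y =>
      have := ih (!b) y
      cases b <;> simp_all [altLtAux, eq_comm]

theorem altLtAux_asymm [LinearOrder α] (x : List α) : ∀ (b : Bool) (y : List α),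
    altLtAux b x y → ¬ altLtAux b y x := by
  induction x with
  | nil => intro b y; cases y <;> cases b <;> simp [altLtAux]
  | cons c x ih =>
    intro b y
    cases y with
    | nil => cases b <;> simp [altLtAux]
    | cons d y =>
      have := ih (!b) y
      cases b
      · simp only [altLtAux, Bool.false_eq_true, if_false]
        rintro (h | ⟨rfl, h⟩) (h' | ⟨h', h''⟩)
        · exact lt_asymm h h'
        · exact absurd h' (ne_of_lt h)
        · exact lt_irrefl _ h'
        · exact this h h''
      · simp only [altLtAux, if_true]
        rintro (h | ⟨rfl, h⟩) (h' | ⟨h', h''⟩)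
        · exact lt_asymm h h'
        · exact absurd h' (ne_of_gt h)
        · exact lt_irrefl _ h'
        · exact this h h''

theorem altLtAux_append [LinearOrder α] (x : List α) : ∀ (b : Bool) (y s t : List α),
    ¬ x <+: y → ¬ y <+: x → (altLtAux b (x ++ s) (y ++ t) ↔ altLtAux b x y) := by
  induction x with
  | nil => intro b y s t h; simp at h
  | cons c x ih =>
    intro b y s t h1 h2
    cases y with
    | nil => simp at h2
    | cons d y =>
      simp only [List.cons_append, altLtAux]
      by_cases hcd : c = d
      · subst hcd
        rw [ih (!b) y s t (by simpa using h1) (by simpa using h2)]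
      · simp [hcd]

theorem altLtAux_core [LinearOrder α] (p q z : List α) (h : altLtAux true p q)
    (hz : z ≠ []) (v : List α) : ∀ b : Bool,
    altLtAux b (v ++ p) (v ++ q) ↔ altLtAux b v (v ++ z) := by
  induction v with
  | nil =>
    intro b
    obtain ⟨d, z, rfl⟩ := List.exists_cons_of_ne_nil hz
    cases b
    · have h1 := altLtAux_asymm _ _ _ h
      have h2 := altLtAux_flip p true q
      simp only [Bool.not_true] at h2
      simp [altLtAux, h2, h1]
    · simp [altLtAux, h]
  | cons c v ih => intro b; simp [altLtAux, ih (!b)]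

theorem galois_prefix_case [LinearOrder α]
    (w u' v' u'' z : List α) (hG : IsGalois w)
    (h1 : w = u' ++ v') (h2 : w = u'' ++ (v' ++ z))
    (hv' : v' ≠ []) (hz : z ≠ []) (b : Bool) :
    altLtAux b (v' ++ u') ((v' ++ z) ++ u'') ↔ altLtAux b v' (v' ++ z) := by
  rw [List.append_assoc]
  refine altLtAux_core _ _ _ ?_ hz v' b
  have hle := hG.2 (u'' ++ v') z (by simp [h2]) (by simp [hv']) hz
  have hrot : w ≠ z ++ (u'' ++ v') := by
    intro he
    have hlen : w.length = u''.length + (v'.length + z.length) := by simp [h2]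
    have hzl := List.length_pos_iff.mpr hz
    have hvl := List.length_pos_iff.mpr hv'
    have hr : w.rotate (u'' ++ v').length = z ++ (u'' ++ v') := by
      rw [h2, ← List.append_assoc, List.rotate_append_length_eq]
    have := hG.1 0 (u'' ++ v').length (by omega) (by simp; omega)
      (by rw [hr, List.rotate_zero]; exact he)
    simp at this
    omega
  have hlt : altLtAux true w (z ++ (u'' ++ v')) := hle.resolve_left hrot
  have hl : u'.length = (z ++ u'').length := by
    have := congrArg List.length (h1.symm.trans h2)
    simp at this ⊢
    omega
  have hne : u' ≠ z ++ u'' := by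
    intro he
    apply hrot
    rw [h1, he, List.append_assoc]
  rw [h1, ← List.append_assoc] at hlt
  refine (altLtAux_append _ _ _ _ _ ?_ ?_).1 hlt
  · exact fun h => hne (h.eq_of_length hl)
  · exact fun h => hne (h.eq_of_length hl.symm).symm

/-- for a primitive Galois word `w` with factorizations
`w = u'v' = u''v''` into nonempty suffixes `v' ≠ v''`, the rotations compare
as the suffixes: `v'u' ≺_alt v''u''` iff `v' ≺_alt v''` (the latter in the
alternating order extended to words of different lengths). -/
theorem galois_rotations_ordered_as_suffixes [LinearOrder α]
    (w u' v' u'' v'' : List α) (hG : IsGalois w)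
    (h1 : w = u' ++ v') (h2 : w = u'' ++ v'')
    (hv' : v' ≠ []) (hv'' : v'' ≠ []) (hne : v' ≠ v'') :
    AltLt (v' ++ u') (v'' ++ u'') ↔ AltLt v' v'' := by
  by_cases ha : v' <+: v''
  · obtain ⟨z, rfl⟩ := ha
    exact galois_prefix_case w u' v' u'' z hG h1 h2 hv' (by rintro rfl; simp at hne) true
  by_cases hb : v'' <+: v'
  · obtain ⟨z, rfl⟩ := hb
    have := galois_prefix_case w u'' v'' u' z hG h2 h1 hv'' (by rintro rfl; simp at hne) false
    have e1 := altLtAux_flip (v'' ++ u'') true ((v'' ++ z) ++ u')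
    have e2 := altLtAux_flip v'' true (v'' ++ z)
    simp only [Bool.not_true] at e1 e2
    exact e1.symm.trans (this.trans e2)
  exact altLtAux_append _ _ _ _ _ ha hb

end Paper
end
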